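/- arXiv:2510.24861 — 5 statements merged into one kernel-verified Lean document; each statement's English description precedes it below -/
import Mathlib

section
/- Let ι_l, ι_r, ι_c be finite index sets and let 𝒳 : ι_l × ι_r × ι_c → ℂ be a third-order tensor (the three groups of modes being the left child α_l, the right child α_r, and the complement of α = α_l ∪ α_r). Define the matricizations X^l ∈ ℂ^{ι_l × (ι_r × ι_c)} by X^l(i_l,(j_r,j_c)) = 𝒳(i_l,j_r,j_c) and X^r ∈ ℂ^{ι_r × (ι_l × ι_c)} by X^r(i_r,(j_l,j_c)) = 𝒳(j_l,i_r,j_c). Then there exists a coefficient array B : (ι_r × ι_c) × (ι_l × ι_c) × ι_c → ℂ such that for all i_l, i_r, i_c: 𝒳(i_l,i_r,i_c) = Σ_{p ∈ ι_l×ι_c} Σ_{q ∈ ι_r×ι_c} X^l(i_l,p) · X^r(i_r,q) · B(q,p,i_c). In particular, every column of the α-matricization X^{α} ∈ ℂ^{(ι_l×ι_r) × ι_c} lies in the column span of the Kronecker product X^r ⊗ X^l. -/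
/- Each slice `M c = 𝒳 · · c` has a generalized inverse `G c`. The columns of `M c` are columns of
`Xl` and its rows are columns of `Xr`, so `M c = M c * G c * M c` is already the required expansion:
`B · · c` is `G c` extended by zero. -/

theorem exists_linearMap_comp_comp_eq_self {R V W : Type*} [Ring R]
    [AddCommGroup V] [Module R V] [IsSemisimpleModule R V]
    [AddCommGroup W] [Module R W] [IsSemisimpleModule R W] (f : V →ₗ[R] W) :
    ∃ g : W →ₗ[R] V, f ∘ₗ g ∘ₗ f = f := by
  obtain ⟨s, hs⟩ := IsSemisimpleModule.lifting_property f.rangeRestrict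
    f.surjective_rangeRestrict LinearMap.id
  obtain ⟨g, hg⟩ := IsSemisimpleModule.extension_property f.range.subtype
    f.range.injective_subtype s
  refine ⟨g, ?_⟩
  calc f ∘ₗ g ∘ₗ f
      = f.range.subtype ∘ₗ (f.rangeRestrict ∘ₗ g ∘ₗ f.range.subtype) ∘ₗ f.rangeRestrict := rfl
    _ = f.range.subtype ∘ₗ f.rangeRestrict := by rw [hg, hs, LinearMap.id_comp]
    _ = f := rfl

theorem exists_matrix_mul_mul_eq_self {R m n : Type*} [Ring R] [IsSemisimpleRing R]
    [Fintype m] [Fintype n] (A : Matrix m n R) : ∃ G : Matrix n m R, A * G * A = A := by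
  classical
  -- Matrices act on row vectors, which is linear even when `R` is not commutative.
  obtain ⟨g, hg⟩ := exists_linearMap_comp_comp_eq_self A.toLinearMapRight'
  refine ⟨LinearMap.toMatrixRight' g, Matrix.toLinearMapRight'.injective ?_⟩
  simpa only [Matrix.toLinearMapRight'_mul, LinearEquiv.symm_apply_apply] using hg

theorem sum_prod_ite_snd_eq {α γ M : Type*} [Fintype α] [Fintype γ] [DecidableEq γ]
    [AddCommMonoid M] (f : α × γ → M) (c : γ) :
    ∑ p : α × γ, (if p.2 = c then f p else 0) = ∑ a, f (a, c) := by
  simp only [Fintype.sum_prod_type, Fintype.sum_ite_eq']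

theorem stmt2_general {R ιl ιr ιc : Type*} [Ring R] [IsSemisimpleRing R]
    [Fintype ιl] [Fintype ιr] [Fintype ιc]
    (𝒳 : ιl → ιr → ιc → R)
    (Xl : Matrix ιl (ιr × ιc) R) (hXl : ∀ il jr jc, Xl il (jr, jc) = 𝒳 il jr jc)
    (Xr : Matrix ιr (ιl × ιc) R) (hXr : ∀ ir jl jc, Xr ir (jl, jc) = 𝒳 jl ir jc) :
    ∃ B : (ιr × ιc) → (ιl × ιc) → ιc → R,
      ∀ il ir ic, 𝒳 il ir ic =
        ∑ p : ιl × ιc, ∑ q : ιr × ιc, Xl il q * B q p ic * Xr ir p := by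
  classical
  let M (c : ιc) : Matrix ιl ιr R := Matrix.of fun i j => 𝒳 i j c
  choose G hG using fun c => exists_matrix_mul_mul_eq_self (M c)
  refine ⟨fun q p c => if p.2 = c then if q.2 = c then G c q.1 p.1 else 0 else 0,
    fun il ir ic => ?_⟩
  calc 𝒳 il ir ic
      = (M ic * G ic * M ic) il ir := (congrFun₂ (hG ic) il ir).symm
    _ = ∑ jl, ∑ jr, Xl il (jr, ic) * G ic jr jl * Xr ir (jl, ic) := by
        simp only [Matrix.mul_apply, Finset.sum_mul, M, Matrix.of_apply, hXl, hXr]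
    _ = ∑ p : ιl × ιc, if p.2 = ic then
          ∑ q : ιr × ιc, if q.2 = ic then Xl il q * G ic q.1 p.1 * Xr ir p else 0 else 0 := by
        simp only [sum_prod_ite_snd_eq]
    _ = ∑ p : ιl × ιc, ∑ q : ιr × ιc,
          Xl il q * (if p.2 = ic then if q.2 = ic then G ic q.1 p.1 else 0 else 0) * Xr ir p := by
        simp only [mul_ite, ite_mul, mul_zero, zero_mul, Finset.sum_ite_irrel,
          Finset.sum_const_zero]

/-- Let `𝒳 : ι_l × ι_r × ι_c → ℂ` be a third-order tensor with
matricizations `Xl ∈ ℂ^{ι_l × (ι_r × ι_c)}`, `Xl i_l (j_r, j_c) = 𝒳 i_l j_r j_c`, and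
`Xr ∈ ℂ^{ι_r × (ι_l × ι_c)}`, `Xr i_r (j_l, j_c) = 𝒳 j_l i_r j_c`. Then there exists a
coefficient array `B` such that for all `i_l, i_r, i_c`,
`𝒳 i_l i_r i_c = Σ_{p ∈ ι_l×ι_c} Σ_{q ∈ ι_r×ι_c} Xl i_l q * Xr i_r p * B q p i_c`.
In particular every column of the `α`-matricization lies in the column span of the
Kronecker product `Xr ⊗ Xl`. -/
theorem stmt2 {ιl ιr ιc : Type*} [Fintype ιl] [Fintype ιr] [Fintype ιc]
    (𝒳 : ιl → ιr → ιc → ℂ)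
    (Xl : Matrix ιl (ιr × ιc) ℂ) (hXl : ∀ il jr jc, Xl il (jr, jc) = 𝒳 il jr jc)
    (Xr : Matrix ιr (ιl × ιc) ℂ) (hXr : ∀ ir jl jc, Xr ir (jl, jc) = 𝒳 jl ir jc) :
    ∃ B : (ιr × ιc) → (ιl × ιc) → ιc → ℂ,
      ∀ il ir ic, 𝒳 il ir ic =
        ∑ p : ιl × ιc, ∑ q : ιr × ιc, Xl il q * Xr ir p * B q p ic := by
  simpa only [mul_right_comm] using stmt2_general 𝒳 Xl hXl Xr hXr
end

section
/- Let d ≥ 1 and let f : ℝ^d → ℝ be three times continuously differentiable with ‖D³f(x)‖ ≤ M for all x (operator norm of the third derivative). Let h_1,…,h_d > 0 with h := max_μ h_μ, and let x₀ ∈ ℝ^d. Define the quadratic polynomial p(x) = a₀ + Σ_μ a_μ ξ_μ + Σ_μ a_{μμ} ξ_μ² + Σ_{μ<ν} a_{μν} ξ_μ ξ_ν, with ξ_μ = (x_μ − x₀_μ)/h_μ, whose coefficients are built from exact point values of f on the stencil: a₀ = f(x₀), a_μ = (f(x₀+h_μ e_μ) − f(x₀−h_μ e_μ))/2, a_{μμ}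 = (f(x₀+h_μ e_μ) + f(x₀−h_μ e_μ))/2 − f(x₀), and a_{μν} = (1/4)( f(x₀+h_μ e_μ+h_ν e_ν) + f(x₀−h_μ e_μ−h_ν e_ν) − f(x₀+h_μ e_μ−h_ν e_ν) − f(x₀−h_μ e_μ+h_ν e_ν) ). Then there is a constant C depending only on d and M such that for every x with |x_μ − x₀_μ| ≤ h_μ/2 for all μ, one has |p(x) − f(x)| ≤ C h³. -/
/-!
The stencil coefficients are linear in `f`, and on a quadratic polynomial they are its exact
coefficients, so the stencil quadratic reproduces every quadratic polynomial. Applied to the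
degree-two Taylor polynomial of `f` at the centre, this leaves only the contribution of the Taylor
remainder, which is of third order at every stencil point and enters with bounded weights.
-/

open Finset Metric

section TaylorRemainder

variable {E F : Type*} [NormedAddCommGroup E] [NormedSpace ℝ E]
  [NormedAddCommGroup F] [NormedSpace ℝ F] [CompleteSpace F]

lemma integral_one_sub_pow (n : ℕ) : ∫ t in (0 : ℝ)..1, (1 - t) ^ n = 1 / (n + 1) := by
  rw [intervalIntegral.integral_comp_sub_left (fun t : ℝ ↦ t ^ n) 1, integral_pow]
  simp

lemma norm_map_add_sub_taylor_le {f : E → F} {x v : E} {n : ℕ} {M : ℝ}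
    (hf : ∀ t ∈ Set.Icc (0 : ℝ) 1, ContDiffAt ℝ (n + 1) f (x + t • v))
    (hM : ∀ t ∈ Set.Icc (0 : ℝ) 1, ‖iteratedFDeriv ℝ (n + 1) f (x + t • v)‖ ≤ M) :
    ‖f (x + v) - ∑ k ∈ range (n + 1), (k.factorial : ℝ)⁻¹ • iteratedFDeriv ℝ k f x fun _ ↦ v‖
      ≤ M * ‖v‖ ^ (n + 1) / (n + 1).factorial := by
  have integrand_le (t : ℝ) (ht : t ∈ Set.Ioc (0 : ℝ) 1) :
      ‖(1 - t) ^ n • iteratedFDeriv ℝ (n + 1) f (x + t • v) fun _ ↦ v‖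
        ≤ (1 - t) ^ n * (M * ‖v‖ ^ (n + 1)) := by
    have h1t : 0 ≤ 1 - t := sub_nonneg.2 ht.2
    rw [norm_smul, norm_pow, Real.norm_of_nonneg h1t]
    gcongr
    simpa using ContinuousMultilinearMap.le_of_opNorm_le (m := fun _ ↦ v)
      (hM t (Set.Ioc_subset_Icc_self ht))
  have integral_le : ‖∫ t in (0 : ℝ)..1, (1 - t) ^ n •
      iteratedFDeriv ℝ (n + 1) f (x + t • v) fun _ ↦ v‖ ≤ M * ‖v‖ ^ (n + 1) / (n + 1) := by
    refine (intervalIntegral.norm_integral_le_of_norm_le zero_le_one (.of_forall integrand_le)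
      (Continuous.intervalIntegrable (by fun_prop) _ _)).trans_eq ?_
    rw [intervalIntegral.integral_mul_const, integral_one_sub_pow]
    ring
  rw [map_add_eq_sum_add_integral_iteratedFDeriv hf, add_sub_cancel_left, norm_smul, norm_inv,
    RCLike.norm_natCast]
  refine (mul_le_mul_of_nonneg_left integral_le (by positivity)).trans_eq ?_
  rw [Nat.factorial_succ]
  push_cast
  field_simp

end TaylorRemainder

section Stencil

variable {ι E F : Type*} [AddCommGroup E] [AddCommGroup F] [Module ℝ F]

/-- The centered difference of `f` at `x` along the step `u`, approximating `Df(x) u`: the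
coefficient `a_μ`. -/
noncomputable def centralDiff (f : E → F) (x u : E) : F :=
  (2⁻¹ : ℝ) • (f (x + u) - f (x - u))

/-- Half of the centered second difference of `f` at `x` along the step `u`, approximating
`D²f(x)(u, u) / 2`: the coefficient `a_μμ`. -/
noncomputable def halfSecondCentralDiff (f : E → F) (x u : E) : F :=
  (2⁻¹ : ℝ) • (f (x + u) + f (x - u)) - f x

/-- The centered mixed second difference of `f` at `x` along the steps `u` and `w`, approximating
`D²f(x)(u, w)`: the coefficient `a_μν`. -/
noncomputable def mixedCentralDiff (f : E → F) (x u w : E) : F :=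
  (4⁻¹ : ℝ) • (f (x + u + w) + f (x - u - w) - f (x + u - w) - f (x - u + w))

/-- The quadratic polynomial whose coefficients are the centered differences of `f` at `x` along
the steps `s i`, as a function of the normalized coordinates `ξ` of the point `x + ∑ i, ξ i • s i`.
The order on `ι` serves only to list each mixed term once. -/
noncomputable def stencilQuadratic [Fintype ι] [LinearOrder ι] (f : E → F) (x : E) (s : ι → E)
    (ξ : ι → ℝ) : F :=
  f x + ∑ i, ξ i • centralDiff f x (s i) + ∑ i, ξ i ^ 2 • halfSecondCentralDiff f x (s i)
    + ∑ i, ∑ j, if i < j then (ξ i * ξ j) • mixedCentralDiff f x (s i) (s j) else 0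

lemma centralDiff_sub (f g : E → F) (x u : E) :
    centralDiff (f - g) x u = centralDiff f x u - centralDiff g x u := by
  simp only [centralDiff, Pi.sub_apply]
  module

lemma halfSecondCentralDiff_sub (f g : E → F) (x u : E) :
    halfSecondCentralDiff (f - g) x u
      = halfSecondCentralDiff f x u - halfSecondCentralDiff g x u := by
  simp only [halfSecondCentralDiff, Pi.sub_apply]
  module

lemma mixedCentralDiff_sub (f g : E → F) (x u w : E) :
    mixedCentralDiff (f - g) x u w = mixedCentralDiff f x u w - mixedCentralDiff g x u w := by
  simp only [mixedCentralDiff, Pi.sub_apply]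
  module

lemma stencilQuadratic_sub [Fintype ι] [LinearOrder ι] (f g : E → F) (x : E) (s : ι → E)
    (ξ : ι → ℝ) :
    stencilQuadratic (f - g) x s ξ = stencilQuadratic f x s ξ - stencilQuadratic g x s ξ := by
  simp only [stencilQuadratic, Pi.sub_apply, centralDiff_sub, halfSecondCentralDiff_sub,
    mixedCentralDiff_sub, smul_sub, ← sum_filter, sum_sub_distrib]
  abel

lemma stencilQuadratic_eq_mul [Fintype ι] [LinearOrder ι] (f : E → ℝ) (x : E) (s : ι → E)
    (ξ : ι → ℝ) :
    stencilQuadratic f x s ξ = f x + ∑ i, (f (x + s i) - f (x - s i)) / 2 * ξ i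
      + ∑ i, ((f (x + s i) + f (x - s i)) / 2 - f x) * ξ i ^ 2
      + ∑ i, ∑ j, if i < j then
          (1 / 4) * (f (x + s i + s j) + f (x - s i - s j) - f (x + s i - s j)
            - f (x - s i + s j)) * ξ i * ξ j
        else 0 := by
  have linear_term (i : ι) : ξ i • centralDiff f x (s i)
      = (f (x + s i) - f (x - s i)) / 2 * ξ i := by
    rw [centralDiff, smul_eq_mul, smul_eq_mul]
    ring
  have square_term (i : ι) : ξ i ^ 2 • halfSecondCentralDiff f x (s i)
      = ((f (x + s i) + f (x - s i)) / 2 - f x) * ξ i ^ 2 := by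
    rw [halfSecondCentralDiff, smul_eq_mul, smul_eq_mul]
    ring
  have mixed_term (i j : ι) : (ξ i * ξ j) • mixedCentralDiff f x (s i) (s j)
      = (1 / 4) * (f (x + s i + s j) + f (x - s i - s j) - f (x + s i - s j)
        - f (x - s i + s j)) * ξ i * ξ j := by
    rw [mixedCentralDiff, smul_eq_mul, smul_eq_mul]
    ring
  simp only [stencilQuadratic, linear_term, square_term, mixed_term]

end Stencil

section Exactness

variable {ι E F : Type*} [AddCommGroup E] [Module ℝ E] [AddCommGroup F] [Module ℝ F]

/-- The quadratic polynomial on `E` with constant term `c`, linear part `L` and quadratic part `Q`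
in the displacement from the centre `x`. -/
def quadraticPolynomial (c : F) (L : E →ₗ[ℝ] F) (Q : QuadraticMap ℝ E F) (x : E) : E → F :=
  fun y ↦ c + L (y - x) + Q (y - x)

variable (c : F) (L : E →ₗ[ℝ] F) (Q : QuadraticMap ℝ E F) (x : E)

@[simp]
lemma quadraticPolynomial_add (v : E) : quadraticPolynomial c L Q x (x + v) = c + L v + Q v := by
  simp [quadraticPolynomial]

@[simp]
lemma quadraticPolynomial_sub (v : E) : quadraticPolynomial c L Q x (x - v) = c - L v + Q v := by
  rw [sub_eq_add_neg, quadraticPolynomial_add, map_neg, QuadraticMap.map_neg, ← sub_eq_add_neg]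

@[simp]
lemma quadraticPolynomial_self : quadraticPolynomial c L Q x x = c := by
  simp [quadraticPolynomial]

lemma centralDiff_quadraticPolynomial (u : E) :
    centralDiff (quadraticPolynomial c L Q x) x u = L u := by
  simp only [centralDiff, quadraticPolynomial_add, quadraticPolynomial_sub]
  module

lemma halfSecondCentralDiff_quadraticPolynomial (u : E) :
    halfSecondCentralDiff (quadraticPolynomial c L Q x) x u = Q u := by
  simp only [halfSecondCentralDiff, quadraticPolynomial_add, quadraticPolynomial_sub,
    quadraticPolynomial_self]
  module

lemma mixedCentralDiff_quadraticPolynomial (u w : E) :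
    mixedCentralDiff (quadraticPolynomial c L Q x) x u w = QuadraticMap.polar Q u w := by
  have hQ_sub : Q (u - w) = Q u + Q w - QuadraticMap.polar Q u w := by
    rw [sub_eq_add_neg, QuadraticMap.map_add Q, QuadraticMap.map_neg, QuadraticMap.polar_neg_right,
      ← sub_eq_add_neg]
  simp only [mixedCentralDiff, add_assoc x, add_sub_assoc x, sub_sub x, sub_add x,
    quadraticPolynomial_add, quadraticPolynomial_sub, hQ_sub, QuadraticMap.map_add Q]
  module

lemma quadraticMap_sum_smul [Fintype ι] [LinearOrder ι] (s : ι → E) (ξ : ι → ℝ) :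
    Q (∑ i, ξ i • s i) = ∑ i, ξ i ^ 2 • Q (s i)
      + ∑ i, ∑ j, if i < j then (ξ i * ξ j) • QuadraticMap.polar Q (s i) (s j) else 0 := by
  have offDiag_lt : {p ∈ (univ : Finset ι).offDiag | p.1 < p.2}
      = {p ∈ (univ ×ˢ univ : Finset (ι × ι)) | p.1 < p.2} := by
    ext p
    simpa using ne_of_lt
  rw [QuadraticMap.map_sum, sum_sym2_filter_not_isDiag, offDiag_lt, sum_filter, sum_product]
  simp [QuadraticMap.map_smul, pow_two, smul_smul, mul_comm]

lemma stencilQuadratic_quadraticPolynomial [Fintype ι] [LinearOrder ι] (s : ι → E) (ξ : ι → ℝ) :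
    stencilQuadratic (quadraticPolynomial c L Q x) x s ξ
      = quadraticPolynomial c L Q x (x + ∑ i, ξ i • s i) := by
  simp only [stencilQuadratic, quadraticPolynomial_self, centralDiff_quadraticPolynomial,
    halfSecondCentralDiff_quadraticPolynomial, mixedCentralDiff_quadraticPolynomial,
    quadraticPolynomial_add, map_sum, map_smul, quadraticMap_sum_smul, add_assoc]

end Exactness

section Stability

variable {ι E F : Type*} [SeminormedAddCommGroup E] [SeminormedAddCommGroup F] [NormedSpace ℝ F]
  {f : E → F} {x : E} {r ε : ℝ}

lemma norm_centralDiff_le {u : E} (hf : ∀ y ∈ closedBall x r, ‖f y‖ ≤ ε) (hu : ‖u‖ ≤ r) :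
    ‖centralDiff f x u‖ ≤ ε := by
  have h_add := hf (x + u) (by simpa)
  have h_sub := hf (x - u) (by simpa [mem_closedBall_iff_norm])
  rw [centralDiff, norm_smul, norm_inv, Real.norm_two]
  linarith [norm_sub_le (f (x + u)) (f (x - u))]

lemma norm_halfSecondCentralDiff_le {u : E} (hf : ∀ y ∈ closedBall x r, ‖f y‖ ≤ ε)
    (hu : ‖u‖ ≤ r) : ‖halfSecondCentralDiff f x u‖ ≤ 2 * ε := by
  have h_add := hf (x + u) (by simpa)
  have h_sub := hf (x - u) (by simpa [mem_closedBall_iff_norm])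
  have h_self := hf x (mem_closedBall_self ((norm_nonneg u).trans hu))
  have h_avg : ‖(2⁻¹ : ℝ) • (f (x + u) + f (x - u))‖ ≤ ε := by
    rw [norm_smul, norm_inv, Real.norm_two]
    linarith [norm_add_le (f (x + u)) (f (x - u))]
  exact (norm_sub_le_of_le h_avg h_self).trans_eq (two_mul ε).symm

lemma norm_mixedCentralDiff_le {u w : E} (hf : ∀ y ∈ closedBall x r, ‖f y‖ ≤ ε)
    (huw : ‖u‖ + ‖w‖ ≤ r) : ‖mixedCentralDiff f x u w‖ ≤ ε := by
  have h_pp : ‖f (x + u + w)‖ ≤ ε := hf _ <| by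
    simpa [add_assoc] using (norm_add_le u w).trans huw
  have h_mm : ‖f (x - u - w)‖ ≤ ε := hf _ <| by
    simpa [sub_sub, mem_closedBall_iff_norm] using (norm_add_le u w).trans huw
  have h_pm : ‖f (x + u - w)‖ ≤ ε := hf _ <| by
    simpa [add_sub_assoc] using (norm_sub_le u w).trans huw
  have h_mp : ‖f (x - u + w)‖ ≤ ε := hf _ <| by
    simpa [sub_add, mem_closedBall_iff_norm] using (norm_sub_le u w).trans huw
  rw [mixedCentralDiff, norm_smul, norm_inv, RCLike.norm_ofNat]
  linarith [norm_sub_le_of_le (norm_sub_le_of_le (norm_add_le_of_le h_pp h_mm) h_pm) h_mp]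

lemma norm_stencilQuadratic_le [Fintype ι] [LinearOrder ι] {s : ι → E} {ξ : ι → ℝ}
    (hr : 0 ≤ r) (hf : ∀ y ∈ closedBall x r, ‖f y‖ ≤ ε) (hs : ∀ i, 2 * ‖s i‖ ≤ r)
    (hξ : ∀ i, |ξ i| ≤ 1) :
    ‖stencilQuadratic f x s ξ‖ ≤ (1 + 3 * Fintype.card ι + Fintype.card ι ^ 2) * ε := by
  set n := Fintype.card ι
  have h_smul {a : ℝ} {v : F} {δ : ℝ} (ha : |a| ≤ 1) (hv : ‖v‖ ≤ δ) : ‖a • v‖ ≤ δ := by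
    rw [norm_smul]
    exact (mul_le_of_le_one_left (norm_nonneg v) ha).trans hv
  have h_sum {g : ι → F} {δ : ℝ} (hg : ∀ i, ‖g i‖ ≤ δ) : ‖∑ i, g i‖ ≤ n * δ := by
    simpa using norm_sum_le_of_le univ fun i _ ↦ hg i
  have hs' (i : ι) : ‖s i‖ ≤ r := by linarith [hs i, norm_nonneg (s i)]
  have h_const : ‖f x‖ ≤ ε := hf x (mem_closedBall_self hr)
  have h_linear : ‖∑ i, ξ i • centralDiff f x (s i)‖ ≤ n * ε :=
    h_sum fun i ↦ h_smul (hξ i) (norm_centralDiff_le hf (hs' i))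
  have h_square : ‖∑ i, ξ i ^ 2 • halfSecondCentralDiff f x (s i)‖ ≤ n * (2 * ε) :=
    h_sum fun i ↦ h_smul (abs_pow (ξ i) 2 ▸ pow_le_one₀ (abs_nonneg _) (hξ i))
      (norm_halfSecondCentralDiff_le hf (hs' i))
  have h_mixed : ‖∑ i, ∑ j, if i < j then (ξ i * ξ j) • mixedCentralDiff f x (s i) (s j) else 0‖
      ≤ n * (n * ε) := by
    refine h_sum fun i ↦ h_sum fun j ↦ ?_
    split_ifs
    · exact h_smul (abs_mul (ξ i) (ξ j) ▸ mul_le_one₀ (hξ i) (abs_nonneg _) (hξ j))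
        (norm_mixedCentralDiff_le hf (by linarith [hs i, hs j]))
    · simpa using (norm_nonneg _).trans h_const
  rw [stencilQuadratic]
  refine (norm_add_le_of_le (norm_add_le_of_le (norm_add_le_of_le h_const h_linear) h_square)
    h_mixed).trans_eq ?_
  ring

lemma norm_stencilQuadratic_sub_le_of_approx [Module ℝ E] [Fintype ι] [LinearOrder ι]
    {s : ι → E} {ξ : ι → ℝ} {c : F} {L : E →ₗ[ℝ] F} {Q : QuadraticMap ℝ E F}
    (hf : ∀ y ∈ closedBall x r, ‖f y - quadraticPolynomial c L Q x y‖ ≤ ε)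
    (hs : ∀ i, 2 * ‖s i‖ ≤ r) (hξ : ∀ i, |ξ i| ≤ 1) (hv : ‖∑ i, ξ i • s i‖ ≤ r) :
    ‖stencilQuadratic f x s ξ - f (x + ∑ i, ξ i • s i)‖
      ≤ (Fintype.card ι + 1) * (Fintype.card ι + 2) * ε := by
  set P := quadraticPolynomial c L Q x
  set y := x + ∑ i, ξ i • s i
  have error_eq : stencilQuadratic f x s ξ - f y = stencilQuadratic (f - P) x s ξ - (f - P) y := by
    rw [stencilQuadratic_sub, stencilQuadratic_quadraticPolynomial, Pi.sub_apply, sub_sub_sub_comm,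
      sub_self, sub_zero]
  rw [error_eq]
  refine (norm_sub_le_of_le (norm_stencilQuadratic_le ((norm_nonneg _).trans hv) hf hs hξ)
    (hf y (by simpa [y] using hv))).trans_eq ?_
  ring

end Stability

section Accuracy

variable {ι E F : Type*} [NormedAddCommGroup E] [NormedSpace ℝ E]
  [NormedAddCommGroup F] [NormedSpace ℝ F]

/-- The degree-two Taylor polynomial of `f` at `x`. -/
noncomputable def taylorQuadratic (f : E → F) (x : E) : E → F :=
  quadraticPolynomial (f x) (fderiv ℝ f x)
    ((2⁻¹ : ℝ) • LinearMap.BilinMap.toQuadraticMap (fderiv ℝ (fderiv ℝ f) x).toLinearMap₁₂) x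

lemma norm_sub_taylorQuadratic_le [CompleteSpace F] {f : E → F} {x : E} {M r : ℝ}
    (hf : ∀ y ∈ closedBall x r, ContDiffAt ℝ 3 f y)
    (hM : ∀ y ∈ closedBall x r, ‖iteratedFDeriv ℝ 3 f y‖ ≤ M) {y : E} (hy : y ∈ closedBall x r) :
    ‖f y - taylorQuadratic f x y‖ ≤ M * r ^ 3 / 6 := by
  obtain ⟨v, rfl⟩ : ∃ v, y = x + v := ⟨y - x, (add_sub_cancel x y).symm⟩
  have hv : ‖v‖ ≤ r := by simpa using hy
  have hM0 : 0 ≤ M := (norm_nonneg _).trans (hM _ hy)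
  have segment_mem (t : ℝ) (ht : t ∈ Set.Icc (0 : ℝ) 1) : x + t • v ∈ closedBall x r := by
    rw [mem_closedBall_iff_norm, add_sub_cancel_left, norm_smul, Real.norm_of_nonneg ht.1]
    exact (mul_le_of_le_one_left (norm_nonneg v) ht.2).trans hv
  have taylor_eq : taylorQuadratic f x (x + v)
      = ∑ k ∈ range 3, (k.factorial : ℝ)⁻¹ • iteratedFDeriv ℝ k f x fun _ ↦ v := by
    simp [taylorQuadratic, sum_range_succ, iteratedFDeriv_two_apply]
  calc ‖f (x + v) - taylorQuadratic f x (x + v)‖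
      ≤ M * ‖v‖ ^ 3 / Nat.factorial 3 := by
        rw [taylor_eq]
        exact norm_map_add_sub_taylor_le (n := 2)
          (fun t ht ↦ (hf _ (segment_mem t ht)).of_le (by norm_num))
          fun t ht ↦ hM _ (segment_mem t ht)
    _ ≤ M * r ^ 3 / 6 := by
        rw [show (Nat.factorial 3 : ℝ) = 6 by norm_num [Nat.factorial]]
        gcongr

theorem stmt8_general [Fintype ι] [LinearOrder ι] [CompleteSpace F] {f : E → F} {x : E}
    {s : ι → E} {ξ : ι → ℝ} {M r : ℝ} (hf : ∀ y ∈ closedBall x r, ContDiffAt ℝ 3 f y)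
    (hM : ∀ y ∈ closedBall x r, ‖iteratedFDeriv ℝ 3 f y‖ ≤ M)
    (hs : ∀ i, 2 * ‖s i‖ ≤ r) (hξ : ∀ i, |ξ i| ≤ 1) (hv : ‖∑ i, ξ i • s i‖ ≤ r) :
    ‖stencilQuadratic f x s ξ - f (x + ∑ i, ξ i • s i)‖
      ≤ (Fintype.card ι + 1) * (Fintype.card ι + 2) * (M * r ^ 3 / 6) :=
  norm_stencilQuadratic_sub_le_of_approx (fun _ ↦ norm_sub_taylorQuadratic_le hf hM) hs hξ hv

end Accuracy

section RectangularGrid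

variable {ι : Type*} [Fintype ι] {h : ι → ℝ}

lemma sum_div_smul_single [DecidableEq ι] (hh : ∀ i, h i ≠ 0) (v : ι → ℝ) :
    ∑ i, (v i / h i) • (Pi.single i (h i) : ι → ℝ) = v := by
  simp [← Pi.single_smul, div_mul_cancel₀ _ (hh _), univ_sum_single]

lemma pi_norm_eq_of_isGreatest_range {H : ℝ} (hh : ∀ i, 0 ≤ h i)
    (hH : IsGreatest (Set.range h) H) : ‖h‖ = H := by
  obtain ⟨⟨i, rfl⟩, h_le⟩ := hH
  apply le_antisymm
  · refine (pi_norm_le_iff_of_nonneg (hh i)).2 fun j ↦ ?_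
    simpa only [Real.norm_of_nonneg (hh j)] using h_le (Set.mem_range_self j)
  · exact (Real.le_norm_self _).trans (norm_le_pi_norm h i)

lemma norm_stencilQuadratic_single_sub_le [LinearOrder ι] {F : Type*} [NormedAddCommGroup F]
    [NormedSpace ℝ F] [CompleteSpace F] {f : (ι → ℝ) → F} {x₀ x : ι → ℝ} {M : ℝ}
    (hf : ∀ y ∈ closedBall x₀ (2 * ‖h‖), ContDiffAt ℝ 3 f y)
    (hM : ∀ y ∈ closedBall x₀ (2 * ‖h‖), ‖iteratedFDeriv ℝ 3 f y‖ ≤ M)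
    (hh : ∀ i, 0 < h i) (hx : ∀ i, |x i - x₀ i| ≤ h i) :
    ‖stencilQuadratic f x₀ (fun i ↦ Pi.single i (h i)) (fun i ↦ (x i - x₀ i) / h i) - f x‖
      ≤ (Fintype.card ι + 1) * (Fintype.card ι + 2) * (M * (2 * ‖h‖) ^ 3 / 6) := by
  have displacement : ∑ i, ((x i - x₀ i) / h i) • (Pi.single i (h i) : ι → ℝ) = x - x₀ :=
    sum_div_smul_single (fun i ↦ (hh i).ne') (x - x₀)
  have step_le (i : ι) : 2 * ‖(Pi.single i (h i) : ι → ℝ)‖ ≤ 2 * ‖h‖ := by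
    rw [Pi.norm_single]
    gcongr
    exact norm_le_pi_norm h i
  have coord_le (i : ι) : |(x i - x₀ i) / h i| ≤ 1 := by
    rw [abs_div, abs_of_pos (hh i)]
    exact div_le_one_of_le₀ (hx i) (hh i).le
  have displacement_le : ‖x - x₀‖ ≤ 2 * ‖h‖ := by
    refine (pi_norm_le_iff_of_nonneg (by positivity)).2 fun i ↦ (hx i).trans ?_
    linarith [(Real.le_norm_self _).trans (norm_le_pi_norm h i), norm_nonneg h]
  have error_le := stmt8_general hf hM step_le coord_le (displacement.symm ▸ displacement_le)
  rwa [displacement, add_sub_cancel] at error_le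

end RectangularGrid

/-- Let `d ≥ 1` and `f : ℝ^d → ℝ` be three times continuously
differentiable with `‖D³f x‖ ≤ M` for all `x`. Let `h μ > 0` with maximum `H`, and
`x₀ ∈ ℝ^d`. Let `p` be the quadratic polynomial in the normalized coordinates
`ξ μ = (x μ - x₀ μ)/h μ` whose coefficients are the centered finite-difference
formulas built from exact point values of `f` on the stencil around `x₀`. Then there
is a constant `C` depending only on `d` and `M` such that for every `x` with
`|x μ - x₀ μ| ≤ h μ / 2` for all `μ`, one has `|p x - f x| ≤ C * H ^ 3`. -/
theorem stmt8 (d : ℕ) (hd : 1 ≤ d) (M : ℝ) :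
    ∃ C : ℝ, ∀ (f : (Fin d → ℝ) → ℝ), ContDiff ℝ 3 f →
      (∀ x, ‖iteratedFDeriv ℝ 3 f x‖ ≤ M) →
      ∀ (h : Fin d → ℝ), (∀ μ, 0 < h μ) →
      ∀ (H : ℝ), IsGreatest (Set.range h) H →
      ∀ (x₀ x : Fin d → ℝ), (∀ μ, |x μ - x₀ μ| ≤ h μ / 2) →
        |(f x₀
          + ∑ μ, (f (x₀ + Pi.single μ (h μ)) - f (x₀ - Pi.single μ (h μ))) / 2
              * ((x μ - x₀ μ) / h μ)
          + ∑ μ, ((f (x₀ + Pi.single μ (h μ)) + f (x₀ - Pi.single μ (h μ))) / 2 - f x₀)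
              * ((x μ - x₀ μ) / h μ) ^ 2
          + ∑ μ, ∑ ν, (if μ < ν then
              (1 / 4) * (f (x₀ + Pi.single μ (h μ) + Pi.single ν (h ν))
                  + f (x₀ - Pi.single μ (h μ) - Pi.single ν (h ν))
                  - f (x₀ + Pi.single μ (h μ) - Pi.single ν (h ν))
                  - f (x₀ - Pi.single μ (h μ) + Pi.single ν (h ν)))
                * ((x μ - x₀ μ) / h μ) * ((x ν - x₀ ν) / h ν)
            else 0))
          - f x| ≤ C * H ^ 3 := by
  refine ⟨(d + 1) * (d + 2) * (M * 2 ^ 3 / 6), fun f hf hM h hh H hH x₀ x hx ↦ ?_⟩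
  rw [← stencilQuadratic_eq_mul f x₀ (fun μ ↦ Pi.single μ (h μ)) fun μ ↦ (x μ - x₀ μ) / h μ,
    ← pi_norm_eq_of_isGreatest_range (fun μ ↦ (hh μ).le) hH]
  refine (norm_stencilQuadratic_single_sub_le (fun _ _ ↦ hf.contDiffAt) (fun y _ ↦ hM y) hh
    fun μ ↦ (hx μ).trans (half_le_self (hh μ).le)).trans_eq ?_
  rw [Fintype.card_fin]
  ring
end

section
/- Let d ≥ 1 and let f : ℝ^d → ℝ be three times continuously differentiable with ‖D^k f(x)‖ ≤ M for all x and k = 1, 2, 3. Let h_1,…,h_d > 0 with h := max_μ h_μ ≤ 1, let x₀ ∈ ℝ^d, and let p be the quadratic polynomial in the normalized coordinates ξ_μ = (x_μ − x₀_μ)/h_μ whose coefficients are the centered finite-difference formulas built from point values of f on the stencil around x₀ (a₀ = f(x₀); a_μ = (f(x₀+h_μe_μ)−f(x₀−h_μe_μ))/2; a_{μμ} = (f(x₀+h_μe_μ)+f(x₀−h_μe_μ))/2 − f(x₀); a_{μν} = (1/4)(f(x₀+h_μe_μ+h_νe_ν)+f(x₀−h_μe_μ−h_νe_ν)−f(x₀+h_μe_μ−h_νe_ν)−f(x₀−h_μe_μ+h_νe_ν))).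 Let x* ∈ ℝ^d satisfy |x*_μ − x₀_μ| ≤ h_μ/2 for all μ, and let x̂ ∈ ℝ^d satisfy ‖x̂ − x*‖_∞ ≤ C₀ h⁴ for some constant C₀. Then there is a constant C depending only on d, M, and C₀ such that |p(x̂) − f(x*)| ≤ C h³. -/
/-!
The coefficients of the interpolant are, up to `O(h ^ 3)` after multiplication by the matching
powers of the normalized coordinates, the coefficients of the second order Taylor polynomial of `f`
at the center. Hence the interpolant agrees with `f` up to `O(h ^ 3)` at every point at distance
`O(h)` from the center, in particular at the approximate foot, and replacing the approximate foot by
the exact one costs a further `O(h ^ 4)` because `f` is Lipschitz.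

The cells may be arbitrarily anisotropic, so the approximate foot may have unbounded normalized
coordinates `ξ i`; only the products `‖e i‖ * |ξ i|` are `O(h)`, where `e i` are the edges of the
cell.
-/

section Taylor

variable {E F : Type*} [NormedAddCommGroup E] [NormedSpace ℝ E] [NormedAddCommGroup F]
  [NormedSpace ℝ F] {f : E → F} {M : ℝ}

theorem norm_sub_le_of_norm_iteratedFDeriv_one_le (hf : Differentiable ℝ f)
    (hM : ∀ x, ‖iteratedFDeriv ℝ 1 f x‖ ≤ M) (x y : E) : ‖f y - f x‖ ≤ M * ‖y - x‖ :=
  convex_univ.norm_image_sub_le_of_norm_fderiv_le (𝕜 := ℝ) (fun z _ => hf z)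
    (fun z _ => by simpa only [norm_iteratedFDeriv_one] using hM z)
    (Set.mem_univ x) (Set.mem_univ y)

theorem fderiv_fderiv_apply_comm (hf : ContDiff ℝ 2 f) (x u v : E) :
    fderiv ℝ (fderiv ℝ f) x u v = fderiv ℝ (fderiv ℝ f) x v u :=
  hf.contDiffAt.isSymmSndFDerivAt (by simp) u v

theorem norm_fderiv_fderiv_sub_le (hf : ContDiff ℝ 3 f)
    (hM : ∀ x, ‖iteratedFDeriv ℝ 3 f x‖ ≤ M) (x y : E) :
    ‖fderiv ℝ (fderiv ℝ f) y - fderiv ℝ (fderiv ℝ f) x‖ ≤ M * ‖y - x‖ := by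
  have hf₁ : ContDiff ℝ 2 (fderiv ℝ f) := hf.fderiv_right (by norm_num)
  have hf₂ : ContDiff ℝ 1 (fderiv ℝ (fderiv ℝ f)) := hf₁.fderiv_right (by norm_num)
  refine norm_sub_le_of_norm_iteratedFDeriv_one_le (hf₂.differentiable one_ne_zero)
    (fun z => ?_) x y
  rw [norm_iteratedFDeriv_fderiv, norm_iteratedFDeriv_fderiv]
  exact hM z

theorem norm_fderiv_sub_sub_le (hf : ContDiff ℝ 3 f) (hM : ∀ x, ‖iteratedFDeriv ℝ 3 f x‖ ≤ M)
    {x a b : E} {r : ℝ} (ha : ‖a - x‖ ≤ r) (hb : ‖b - x‖ ≤ r) :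
    ‖fderiv ℝ f b - fderiv ℝ f a - fderiv ℝ (fderiv ℝ f) x (b - a)‖ ≤ M * r * ‖b - a‖ := by
  have hM₀ : 0 ≤ M := (norm_nonneg _).trans (hM x)
  have hf₁ : ContDiff ℝ 2 (fderiv ℝ f) := hf.fderiv_right (by norm_num)
  refine (convex_closedBall x r).norm_image_sub_le_of_norm_fderiv_le' (𝕜 := ℝ)
    (fun z _ => hf₁.differentiable two_ne_zero z) (fun z hz => ?_)
    (mem_closedBall_iff_norm.2 ha) (mem_closedBall_iff_norm.2 hb)
  calc
    _ ≤ M * ‖z - x‖ := norm_fderiv_fderiv_sub_le hf hM x z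
    _ ≤ M * r := by gcongr; exact mem_closedBall_iff_norm.1 hz

theorem hasFDerivAt_half_smul_apply_self {B : E →L[ℝ] E →L[ℝ] F} (hB : ∀ u v, B u v = B v u)
    (w : E) : HasFDerivAt (fun w => (1 / 2 : ℝ) • B w w) (B w) w := by
  refine ((B.hasFDerivAt.clm_apply (hasFDerivAt_id w)).const_smul (1 / 2 : ℝ)).congr_fderiv ?_
  ext v
  have hhalf : (1 / 2 : ℝ) • B w v + (1 / 2 : ℝ) • B w v = B w v := by
    rw [← add_smul, add_halves, one_smul]
  simpa [hB v w] using hhalf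

theorem norm_sub_taylor_two_le (hf : ContDiff ℝ 3 f) (hM : ∀ x, ‖iteratedFDeriv ℝ 3 f x‖ ≤ M)
    (x v : E) :
    ‖f (x + v) - f x - fderiv ℝ f x v - (1 / 2 : ℝ) • fderiv ℝ (fderiv ℝ f) x v v‖
      ≤ M * ‖v‖ ^ 3 := by
  have hM₀ : 0 ≤ M := (norm_nonneg _).trans (hM x)
  set A := fderiv ℝ f x
  set B := fderiv ℝ (fderiv ℝ f) x
  have hderiv (w : E) :
      HasFDerivAt (fun w => f (x + w) - (1 / 2 : ℝ) • B w w) (fderiv ℝ f (x + w) - B w) w :=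
    ((hasFDerivAt_comp_add_left x).2 (hf.differentiable three_ne_zero _).hasFDerivAt).sub
      (hasFDerivAt_half_smul_apply_self (fderiv_fderiv_apply_comm (hf.of_le (by norm_num)) x) w)
  have hbound : ∀ w ∈ Metric.closedBall (0 : E) ‖v‖,
      ‖fderiv ℝ f (x + w) - B w - A‖ ≤ M * ‖v‖ ^ 2 := by
    intro w hw
    have hwv : ‖w‖ ≤ ‖v‖ := mem_closedBall_zero_iff.1 hw
    calc
      _ = ‖fderiv ℝ f (x + w) - A - B (x + w - x)‖ := by
        rw [add_sub_cancel_left, sub_right_comm]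
      _ ≤ M * ‖v‖ * ‖x + w - x‖ := norm_fderiv_sub_sub_le hf hM (by simp) (by simpa using hwv)
      _ ≤ M * ‖v‖ * ‖v‖ := by gcongr; simpa using hwv
      _ = M * ‖v‖ ^ 2 := by ring
  have hmean := (convex_closedBall (0 : E) ‖v‖).norm_image_sub_le_of_norm_hasFDerivWithin_le'
    (fun w _ => (hderiv w).hasFDerivWithinAt) hbound (x := 0) (y := v) (by simp) (by simp)
  calc
    _ = ‖f (x + v) - (1 / 2 : ℝ) • B v v - (f (x + 0) - (1 / 2 : ℝ) • B 0 0) - A (v - 0)‖ := by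
      simp only [add_zero, map_zero, smul_zero, sub_zero]
      congr 1
      abel
    _ ≤ M * ‖v‖ ^ 2 * ‖v - 0‖ := hmean
    _ = M * ‖v‖ ^ 3 := by rw [sub_zero]; ring

theorem norm_mixed_difference_sub_le (hf : ContDiff ℝ 3 f)
    (hM : ∀ x, ‖iteratedFDeriv ℝ 3 f x‖ ≤ M) (x u v : E) :
    ‖f (x + u + v) - f (x + u - v) - (f (x - u + v) - f (x - u - v))
        - (4 : ℝ) • fderiv ℝ (fderiv ℝ f) x v u‖ ≤ 4 * (M * ‖u‖ * ‖v‖ * (‖u‖ + ‖v‖)) := by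
  set B := fderiv ℝ (fderiv ℝ f) x
  have hshift (c w : E) : HasFDerivAt (fun w => f (x + w + c)) (fderiv ℝ f (x + w + c)) w :=
    (hf.differentiable three_ne_zero _).hasFDerivAt.comp w
      (((hasFDerivAt_id w).const_add x).add_const c)
  have hbound : ∀ w ∈ Metric.closedBall (0 : E) ‖u‖,
      ‖fderiv ℝ f (x + w + v) - fderiv ℝ f (x + w + -v) - (2 : ℝ) • B v‖
        ≤ 2 * M * (‖u‖ + ‖v‖) * ‖v‖ := by
    intro w hw
    have hwu : ‖w‖ ≤ ‖u‖ := mem_closedBall_zero_iff.1 hw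
    have hdist (c : E) : ‖x + w + c - x‖ ≤ ‖u‖ + ‖c‖ := by
      rw [add_assoc, add_sub_cancel_left]
      exact norm_add_le_of_le hwu le_rfl
    have hv : x + w + v - (x + w + -v) = (2 : ℝ) • v := by rw [two_smul]; abel
    have h := norm_fderiv_sub_sub_le hf hM ((hdist (-v)).trans_eq (by rw [norm_neg])) (hdist v)
    rw [hv, map_smul, norm_smul, Real.norm_two] at h
    exact h.trans_eq (by ring)
  have hmean := (convex_closedBall (0 : E) ‖u‖).norm_image_sub_le_of_norm_hasFDerivWithin_le'
    (fun w _ => ((hshift v w).sub (hshift (-v) w)).hasFDerivWithinAt) hbound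
    (x := -u) (y := u) (by simp) (by simp)
  have hu : u - -u = (2 : ℝ) • u := by rw [two_smul, sub_neg_eq_add]
  have hB : ((2 : ℝ) • B v) ((2 : ℝ) • u) = (4 : ℝ) • B v u := by
    rw [map_smul, smul_apply, smul_smul]
    norm_num
  rw [hu, hB, norm_smul, Real.norm_two] at hmean
  simp only [Pi.sub_apply, ← sub_eq_add_neg] at hmean
  exact hmean.trans_eq (by ring)

end Taylor

section FiniteDifference

/-- The centered first difference of `f` at `x` with step `u`, an approximation of `D f(x) u`. -/
noncomputable def centeredDiff {E : Type*} [AddGroup E] (f : E → ℝ) (x u : E) : ℝ :=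
  (f (x + u) - f (x - u)) / 2

/-- The centered second difference of `f` at `x` with step `u`, normalized as a Taylor coefficient:
it approximates `D²f(x)(u, u) / 2`. -/
noncomputable def secondDiff {E : Type*} [AddGroup E] (f : E → ℝ) (x u : E) : ℝ :=
  (f (x + u) + f (x - u)) / 2 - f x

/-- The centered mixed difference of `f` at `x` with steps `u` and `v`, an approximation of
`D²f(x)(u, v)`. -/
noncomputable def mixedDiff {E : Type*} [AddGroup E] (f : E → ℝ) (x u v : E) : ℝ :=
  1 / 4 * (f (x + u + v) + f (x - u - v) - f (x + u - v) - f (x - u + v))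

variable {E : Type*} [NormedAddCommGroup E] [NormedSpace ℝ E] {f : E → ℝ} {M : ℝ}

theorem abs_centeredDiff_sub_le (hf : ContDiff ℝ 3 f) (hM : ∀ x, ‖iteratedFDeriv ℝ 3 f x‖ ≤ M)
    (x u : E) : |centeredDiff f x u - fderiv ℝ f x u| ≤ M * ‖u‖ ^ 3 := by
  have hpos := abs_le.1 (norm_sub_taylor_two_le hf hM x u)
  have hneg := abs_le.1 (norm_sub_taylor_two_le hf hM x (-u))
  simp only [norm_neg, map_neg, neg_apply, neg_neg, ← sub_eq_add_neg] at hneg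
  rw [centeredDiff, abs_le]
  constructor <;> linarith

theorem abs_secondDiff_sub_le (hf : ContDiff ℝ 3 f) (hM : ∀ x, ‖iteratedFDeriv ℝ 3 f x‖ ≤ M)
    (x u : E) : |secondDiff f x u - 1 / 2 * fderiv ℝ (fderiv ℝ f) x u u| ≤ M * ‖u‖ ^ 3 := by
  have hpos := abs_le.1 (norm_sub_taylor_two_le hf hM x u)
  have hneg := abs_le.1 (norm_sub_taylor_two_le hf hM x (-u))
  simp only [norm_neg, map_neg, neg_apply, neg_neg, ← sub_eq_add_neg, smul_eq_mul] at hpos hneg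
  rw [secondDiff, abs_le]
  constructor <;> linarith

-- The factor `‖u‖ * ‖v‖`, instead of a bare `(‖u‖ + ‖v‖) ^ 3`, absorbs large coordinates along
-- short steps.
theorem abs_mixedDiff_sub_le (hf : ContDiff ℝ 3 f) (hM : ∀ x, ‖iteratedFDeriv ℝ 3 f x‖ ≤ M)
    (x u v : E) :
    |mixedDiff f x u v - fderiv ℝ (fderiv ℝ f) x u v| ≤ M * ‖u‖ * ‖v‖ * (‖u‖ + ‖v‖) := by
  have h := abs_le.1 (norm_mixed_difference_sub_le hf hM x u v)
  rw [fderiv_fderiv_apply_comm (hf.of_le (by norm_num)) x v u, smul_eq_mul] at h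
  rw [mixedDiff, abs_le]
  constructor <;> linarith

end FiniteDifference

section Sums

variable {ι : Type*} [Fintype ι]

theorem norm_sum_le_card_mul {E : Type*} [SeminormedAddCommGroup E] {g : ι → E} {c : ℝ}
    (hg : ∀ i, ‖g i‖ ≤ c) : ‖∑ i, g i‖ ≤ Fintype.card ι * c :=
  (norm_sum_le_of_le _ fun i _ => hg i).trans_eq (by simp)

theorem sum_sum_eq_sum_diag_add_two_nsmul_sum_lt [LinearOrder ι] {G : Type*} [AddCommMonoid G]
    {b : ι → ι → G} (hb : ∀ i j, b i j = b j i) :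
    ∑ i, ∑ j, b i j = ∑ i, b i i + 2 • ∑ i, ∑ j, if i < j then b i j else 0 := by
  have hsplit (i j : ι) : b i j =
      (if i = j then b i j else 0) + ((if i < j then b i j else 0)
        + if j < i then b j i else 0) := by
    rcases lt_trichotomy i j with h | h | h
    · simp [h, h.ne, h.not_gt]
    · simp [h]
    · simp [h, h.ne', h.not_gt, hb i j]
  calc
    _ = ∑ i, ∑ j, ((if i = j then b i j else 0) + ((if i < j then b i j else 0)
        + if j < i then b j i else 0)) := by simp_rw [← hsplit]
    _ = ∑ i, b i i + (∑ i, ∑ j, (if i < j then b i j else 0)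
        + ∑ i, ∑ j, if j < i then b j i else 0) := by simp [Finset.sum_add_distrib]
    _ = _ := by rw [two_nsmul, Finset.sum_comm (f := fun i j => if j < i then b j i else 0)]

theorem apply_sum_smul_self [LinearOrder ι] {R V : Type*} [CommRing R] [AddCommGroup V] [Module R V]
    {B : V →ₗ[R] V →ₗ[R] R} (hB : ∀ u v, B u v = B v u) (e : ι → V) (ξ : ι → R) :
    B (∑ i, ξ i • e i) (∑ i, ξ i • e i) = ∑ i, B (e i) (e i) * ξ i ^ 2
      + 2 * ∑ i, ∑ j, if i < j then B (e i) (e j) * ξ i * ξ j else 0 := by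
  calc
    _ = ∑ i, ∑ j, B (e i) (e j) * ξ i * ξ j := by
      simp only [map_sum, map_smul, LinearMap.sum_apply, LinearMap.smul_apply, smul_eq_mul,
        Finset.mul_sum]
      rw [Finset.sum_comm]
      exact Finset.sum_congr rfl fun i _ => Finset.sum_congr rfl fun j _ => by ring
    _ = _ := by
      rw [sum_sum_eq_sum_diag_add_two_nsmul_sum_lt fun i j => by rw [hB]; ring]
      simp only [nsmul_eq_mul, Nat.cast_ofNat, pow_two, mul_assoc]

end Sums

section Interpolant

/-- The value at `x + ∑ i, ξ i • e i` of the quadratic reconstruction of `f` from its values on the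
stencil around `x` spanned by the steps `e i`; the order on `ι` lists each mixed term once. -/
noncomputable def quadraticInterpolant {E ι : Type*} [AddGroup E] [Fintype ι] [LinearOrder ι]
    (f : E → ℝ) (x : E) (e : ι → E) (ξ : ι → ℝ) : ℝ :=
  f x + ∑ i, centeredDiff f x (e i) * ξ i + ∑ i, secondDiff f x (e i) * ξ i ^ 2
    + ∑ i, ∑ j, if i < j then mixedDiff f x (e i) (e j) * ξ i * ξ j else 0

variable {E ι : Type*} [NormedAddCommGroup E] [NormedSpace ℝ E] [Fintype ι]
  {f : E → ℝ} {M r : ℝ} {e : ι → E} {ξ : ι → ℝ}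

theorem abs_sum_centeredDiff_sub_mul_le (hf : ContDiff ℝ 3 f)
    (hM : ∀ x, ‖iteratedFDeriv ℝ 3 f x‖ ≤ M) (x : E) (he : ∀ i, ‖e i‖ ≤ r)
    (hξ : ∀ i, ‖e i‖ * |ξ i| ≤ r) :
    |∑ i, (centeredDiff f x (e i) - fderiv ℝ f x (e i)) * ξ i|
      ≤ Fintype.card ι * (M * r ^ 3) := by
  have hM₀ : 0 ≤ M := (norm_nonneg _).trans (hM x)
  refine norm_sum_le_card_mul (E := ℝ) fun i => ?_
  rw [Real.norm_eq_abs, abs_mul]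
  calc
    _ ≤ M * ‖e i‖ ^ 3 * |ξ i| := by gcongr; exact abs_centeredDiff_sub_le hf hM x (e i)
    _ = M * (‖e i‖ ^ 2 * (‖e i‖ * |ξ i|)) := by ring
    _ ≤ M * (r ^ 2 * r) := by gcongr; exacts [he i, hξ i]
    _ = M * r ^ 3 := by ring

theorem abs_sum_secondDiff_sub_mul_le (hf : ContDiff ℝ 3 f)
    (hM : ∀ x, ‖iteratedFDeriv ℝ 3 f x‖ ≤ M) (x : E) (he : ∀ i, ‖e i‖ ≤ r)
    (hξ : ∀ i, ‖e i‖ * |ξ i| ≤ r) :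
    |∑ i, (secondDiff f x (e i) - 1 / 2 * fderiv ℝ (fderiv ℝ f) x (e i) (e i)) * ξ i ^ 2|
      ≤ Fintype.card ι * (M * r ^ 3) := by
  have hM₀ : 0 ≤ M := (norm_nonneg _).trans (hM x)
  refine norm_sum_le_card_mul (E := ℝ) fun i => ?_
  have hr : 0 ≤ r := (norm_nonneg _).trans (he i)
  rw [Real.norm_eq_abs, abs_mul, abs_pow]
  calc
    _ ≤ M * ‖e i‖ ^ 3 * |ξ i| ^ 2 := by gcongr; exact abs_secondDiff_sub_le hf hM x (e i)
    _ = M * (‖e i‖ * (‖e i‖ * |ξ i|) ^ 2) := by ring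
    _ ≤ M * (r * r ^ 2) := by gcongr; exacts [he i, hξ i]
    _ = M * r ^ 3 := by ring

variable [LinearOrder ι]

theorem quadraticInterpolant_eq_taylor_two_add (hf : ContDiff ℝ 2 f) (x : E) (e : ι → E)
    (ξ : ι → ℝ) :
    quadraticInterpolant f x e ξ =
      f x + fderiv ℝ f x (∑ i, ξ i • e i)
        + 1 / 2 * fderiv ℝ (fderiv ℝ f) x (∑ i, ξ i • e i) (∑ i, ξ i • e i)
        + (∑ i, (centeredDiff f x (e i) - fderiv ℝ f x (e i)) * ξ i
          + ∑ i, (secondDiff f x (e i) - 1 / 2 * fderiv ℝ (fderiv ℝ f) x (e i) (e i)) * ξ i ^ 2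
          + ∑ i, ∑ j, if i < j then
              (mixedDiff f x (e i) (e j) - fderiv ℝ (fderiv ℝ f) x (e i) (e j)) * ξ i * ξ j
            else 0) := by
  have hlinear : fderiv ℝ f x (∑ i, ξ i • e i) = ∑ i, fderiv ℝ f x (e i) * ξ i := by
    simp [mul_comm]
  have hite (i j : ι) (a b : ℝ) : (if i < j then (a - b) * ξ i * ξ j else 0) =
      (if i < j then a * ξ i * ξ j else 0) - if i < j then b * ξ i * ξ j else 0 := by
    split_ifs <;> ring
  have hquadratic := apply_sum_smul_self (B := (fderiv ℝ (fderiv ℝ f) x).toLinearMap₁₂)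
    (fderiv_fderiv_apply_comm hf x) e ξ
  simp only [ContinuousLinearMap.toLinearMap₁₂_apply_apply_apply] at hquadratic
  rw [hlinear, hquadratic, quadraticInterpolant]
  simp only [hite, sub_mul (centeredDiff _ _ _), sub_mul (secondDiff _ _ _),
    Finset.sum_sub_distrib, mul_assoc (1 / 2 : ℝ), ← Finset.mul_sum]
  ring

theorem abs_sum_mixedDiff_sub_mul_le (hf : ContDiff ℝ 3 f)
    (hM : ∀ x, ‖iteratedFDeriv ℝ 3 f x‖ ≤ M) (x : E) (he : ∀ i, ‖e i‖ ≤ r)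
    (hξ : ∀ i, ‖e i‖ * |ξ i| ≤ r) :
    |∑ i, ∑ j, if i < j then
        (mixedDiff f x (e i) (e j) - fderiv ℝ (fderiv ℝ f) x (e i) (e j)) * ξ i * ξ j else 0|
      ≤ Fintype.card ι * (Fintype.card ι * (2 * (M * r ^ 3))) := by
  have hM₀ : 0 ≤ M := (norm_nonneg _).trans (hM x)
  refine norm_sum_le_card_mul (E := ℝ) fun i => norm_sum_le_card_mul fun j => ?_
  have hr : 0 ≤ r := (norm_nonneg _).trans (he i)
  split_ifs
  · rw [Real.norm_eq_abs, abs_mul, abs_mul]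
    calc
      _ ≤ M * ‖e i‖ * ‖e j‖ * (‖e i‖ + ‖e j‖) * |ξ i| * |ξ j| := by
        gcongr; exact abs_mixedDiff_sub_le hf hM x (e i) (e j)
      _ = M * ((‖e i‖ + ‖e j‖) * ((‖e i‖ * |ξ i|) * (‖e j‖ * |ξ j|))) := by ring
      _ ≤ M * ((r + r) * (r * r)) := by gcongr; exacts [he i, he j, hξ i, hξ j]
      _ = 2 * (M * r ^ 3) := by ring
  · rw [norm_zero]
    positivity

theorem abs_quadraticInterpolant_sub_le (hf : ContDiff ℝ 3 f)
    (hM : ∀ x, ‖iteratedFDeriv ℝ 3 f x‖ ≤ M) (x : E) (he : ∀ i, ‖e i‖ ≤ r)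
    (hξ : ∀ i, ‖e i‖ * |ξ i| ≤ r) :
    |quadraticInterpolant f x e ξ - f (x + ∑ i, ξ i • e i)|
      ≤ (2 * Fintype.card ι + 2 * Fintype.card ι ^ 2 + Fintype.card ι ^ 3) * M * r ^ 3 := by
  have hM₀ : 0 ≤ M := (norm_nonneg _).trans (hM x)
  have hnorm : ‖∑ i, ξ i • e i‖ ≤ Fintype.card ι * r :=
    norm_sum_le_card_mul fun i => by rw [norm_smul, mul_comm]; exact hξ i
  have htaylor := (norm_sub_taylor_two_le hf hM x (∑ i, ξ i • e i)).trans
    (mul_le_mul_of_nonneg_left (pow_le_pow_left₀ (norm_nonneg _) hnorm 3) hM₀)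
  have hcentered := abs_sum_centeredDiff_sub_mul_le hf hM x he hξ
  have hsecond := abs_sum_secondDiff_sub_mul_le hf hM x he hξ
  have hmixed := abs_sum_mixedDiff_sub_mul_le hf hM x he hξ
  rw [quadraticInterpolant_eq_taylor_two_add (hf.of_le (by norm_num))]
  rw [Real.norm_eq_abs, smul_eq_mul] at htaylor
  rw [abs_le] at htaylor hcentered hsecond hmixed ⊢
  constructor <;> linarith

end Interpolant

section Box

variable {ι : Type*} [Fintype ι]

theorem add_sum_div_smul_single [DecidableEq ι] {h : ι → ℝ} (hh : ∀ μ, h μ ≠ 0) (x y : ι → ℝ) :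
    x + ∑ μ, ((y μ - x μ) / h μ) • (Pi.single μ (h μ) : ι → ℝ) = y := by
  have hsingle (μ : ι) : ((y μ - x μ) / h μ) • (Pi.single μ (h μ) : ι → ℝ)
      = Pi.single μ ((y - x) μ) := by
    rw [← Pi.single_smul, smul_eq_mul, div_mul_cancel₀ _ (hh μ), Pi.sub_apply]
  simp only [hsingle, Finset.univ_sum_single, add_sub_cancel]

theorem norm_single_mul_abs_div [DecidableEq ι] (μ : ι) {a : ℝ} (ha : a ≠ 0) (t : ℝ) :
    ‖(Pi.single μ a : ι → ℝ)‖ * |t / a| = |t| := by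
  rw [Pi.norm_single, Real.norm_eq_abs, ← abs_mul, mul_div_cancel₀ t ha]

theorem stmt9_general [LinearOrder ι] {f : (ι → ℝ) → ℝ} {M₁ M₃ C₀ H : ℝ} {k : ℕ} (hk : 3 ≤ k)
    (hf : ContDiff ℝ 3 f) (hM₁ : ∀ x, ‖iteratedFDeriv ℝ 1 f x‖ ≤ M₁)
    (hM₃ : ∀ x, ‖iteratedFDeriv ℝ 3 f x‖ ≤ M₃) {h : ι → ℝ} (hpos : ∀ μ, 0 < h μ)
    (hH : IsGreatest (Set.range h) H) (hH₁ : H ≤ 1) {x₀ xstar xhat : ι → ℝ}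
    (hstar : ∀ μ, |xstar μ - x₀ μ| ≤ h μ / 2) (hhat : ‖xhat - xstar‖ ≤ C₀ * H ^ k) :
    |quadraticInterpolant f x₀ (fun μ => Pi.single μ (h μ)) (fun μ => (xhat μ - x₀ μ) / h μ)
        - f xstar|
      ≤ ((2 * Fintype.card ι + 2 * Fintype.card ι ^ 2 + Fintype.card ι ^ 3) * M₃ * (1 + C₀) ^ 3
          + M₁ * C₀) * H ^ 3 := by
  have hle (μ : ι) : h μ ≤ H := hH.2 ⟨μ, rfl⟩
  have hH₀ : 0 < H := by
    obtain ⟨μ, rfl⟩ := hH.1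
    exact hpos μ
  have hC₀ : 0 ≤ C₀ := nonneg_of_mul_nonneg_left ((norm_nonneg _).trans hhat) (by positivity)
  have hM₁₀ : 0 ≤ M₁ := (norm_nonneg _).trans (hM₁ 0)
  have hedge (μ : ι) : ‖(Pi.single μ (h μ) : ι → ℝ)‖ ≤ (1 + C₀) * H := by
    rw [Pi.norm_single, Real.norm_of_nonneg (hpos μ).le]
    exact (hle μ).trans (le_mul_of_one_le_left hH₀.le (by linarith))
  have hcoord (μ : ι) : ‖(Pi.single μ (h μ) : ι → ℝ)‖ * |(xhat μ - x₀ μ) / h μ|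
      ≤ (1 + C₀) * H := by
    rw [norm_single_mul_abs_div μ (hpos μ).ne']
    calc
      _ ≤ |xhat μ - xstar μ| + |xstar μ - x₀ μ| := abs_sub_le _ _ _
      _ ≤ C₀ * H ^ k + h μ / 2 :=
        add_le_add ((norm_le_pi_norm (xhat - xstar) μ).trans hhat) (hstar μ)
      _ ≤ C₀ * H + H := by
        gcongr
        · exact pow_le_of_le_one hH₀.le hH₁ (by lia)
        · linarith [hpos μ, hle μ]
      _ = (1 + C₀) * H := by ring
  have hinterp := abs_quadraticInterpolant_sub_le hf hM₃ x₀ hedge hcoord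
  rw [add_sum_div_smul_single fun μ => (hpos μ).ne'] at hinterp
  have hfoot : |f xhat - f xstar| ≤ M₁ * (C₀ * H ^ 3) :=
    calc
      _ ≤ M₁ * ‖xhat - xstar‖ :=
        norm_sub_le_of_norm_iteratedFDeriv_one_le (hf.differentiable three_ne_zero) hM₁ _ _
      _ ≤ M₁ * (C₀ * H ^ 3) := by
        gcongr
        exact hhat.trans (by gcongr ?_ * ?_; exact pow_le_pow_of_le_one hH₀.le hH₁ hk)
  exact ((abs_sub_le _ (f xhat) _).trans (add_le_add hinterp hfoot)).trans_eq (by ring)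

end Box

/-- Proposition 2.1 of the paper. Let `d ≥ 1` and `f : ℝ^d → ℝ` be
three times continuously differentiable with `‖D^k f x‖ ≤ M` for all `x` and
`k = 1, 2, 3`. Let `h μ > 0` with maximum `H ≤ 1`, and `x₀ ∈ ℝ^d`. Let `p` be the
quadratic polynomial in the normalized coordinates `ξ μ = (x μ - x₀ μ)/h μ` whose
coefficients are the centered finite-difference formulas built from point values of
`f` on the stencil around `x₀`. Let `xstar` satisfy `|xstar μ - x₀ μ| ≤ h μ / 2` for
all `μ`, and let `xhat` satisfy `‖xhat - xstar‖_∞ ≤ C₀ * H ^ 4`. Then there is a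
constant `C` depending only on `d`, `M`, and `C₀` such that
`|p xhat - f xstar| ≤ C * H ^ 3`. (The norm on `Fin d → ℝ` is the sup norm.) -/
theorem stmt9 (d : ℕ) (hd : 1 ≤ d) (M C₀ : ℝ) :
    ∃ C : ℝ, ∀ (f : (Fin d → ℝ) → ℝ), ContDiff ℝ 3 f →
      (∀ x, ‖iteratedFDeriv ℝ 1 f x‖ ≤ M ∧ ‖iteratedFDeriv ℝ 2 f x‖ ≤ M ∧
        ‖iteratedFDeriv ℝ 3 f x‖ ≤ M) →
      ∀ (h : Fin d → ℝ), (∀ μ, 0 < h μ) →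
      ∀ (H : ℝ), IsGreatest (Set.range h) H → H ≤ 1 →
      ∀ (x₀ xstar xhat : Fin d → ℝ), (∀ μ, |xstar μ - x₀ μ| ≤ h μ / 2) →
        ‖xhat - xstar‖ ≤ C₀ * H ^ 4 →
        |(f x₀
          + ∑ μ, (f (x₀ + Pi.single μ (h μ)) - f (x₀ - Pi.single μ (h μ))) / 2
              * ((xhat μ - x₀ μ) / h μ)
          + ∑ μ, ((f (x₀ + Pi.single μ (h μ)) + f (x₀ - Pi.single μ (h μ))) / 2 - f x₀)
              * ((xhat μ - x₀ μ) / h μ) ^ 2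
          + ∑ μ, ∑ ν, (if μ < ν then
              (1 / 4) * (f (x₀ + Pi.single μ (h μ) + Pi.single ν (h ν))
                  + f (x₀ - Pi.single μ (h μ) - Pi.single ν (h ν))
                  - f (x₀ + Pi.single μ (h μ) - Pi.single ν (h ν))
                  - f (x₀ - Pi.single μ (h μ) + Pi.single ν (h ν)))
                * ((xhat μ - x₀ μ) / h μ) * ((xhat ν - x₀ ν) / h ν)
            else 0))
          - f xstar| ≤ C * H ^ 3 :=
  ⟨_, fun _ hf hM _ hpos _ hH hH₁ _ _ _ hstar hhat =>
    stmt9_general (by norm_num) hf (fun x => (hM x).1) (fun x => (hM x).2.2) hpos hH hH₁ hstar hhat⟩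
end

section
/- Let A and A' be m × n matrices over a field, let R = A − A', and suppose R(i₀, j₀) ≠ 0 for some indices i₀, j₀. Define the rank-one corrected matrix A'' by A''(i,j) = A'(i,j) + R(i,j₀)·R(i₀,j)/R(i₀,j₀). Then the new residual R'' = A − A'' satisfies: (1) R''(i₀, j) = 0 for all j and R''(i, j₀) = 0 for all i; (2) if some row i' of R is identically zero, then row i' of R'' is identically zero, and if some column j' of R is identically zero, then column j' of R'' is identically zero. -/
section CrossCorrection

open Matrix

variable {α m n : Type*}

section Semiring

variable [Semiring α] (R : Matrix m n α) (i₀ : m) (j₀ : n)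

/-- The rank-one cross of `R` through the pivot `(i₀, j₀)`, which a step of adaptive cross
approximation adds to the current approximant with residual `R`. The inverse of the pivot stands
between the column and the row, as it must over a noncommutative ring; `Ring.inverse` makes the
cross zero when the pivot is not a unit. -/
noncomputable def crossCorrection : Matrix m n α :=
  vecMulVec (R.col j₀) (Ring.inverse (R i₀ j₀) • R.row i₀)

theorem crossCorrection_apply (i : m) (j : n) :
    crossCorrection R i₀ j₀ i j = R i j₀ * (Ring.inverse (R i₀ j₀) * R i₀ j) :=
  rfl

variable {R i₀ j₀}

theorem crossCorrection_apply_pivot_row (hpiv : IsUnit (R i₀ j₀)) (j : n) :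
    crossCorrection R i₀ j₀ i₀ j = R i₀ j := by
  rw [crossCorrection_apply, Ring.mul_inverse_cancel_left _ _ hpiv]

theorem crossCorrection_apply_pivot_col (hpiv : IsUnit (R i₀ j₀)) (i : m) :
    crossCorrection R i₀ j₀ i j₀ = R i j₀ := by
  rw [crossCorrection_apply, Ring.inverse_mul_cancel _ hpiv, mul_one]

theorem crossCorrection_apply_eq_zero_of_pivot_col_eq_zero {i : m} (h : R i j₀ = 0) (j : n) :
    crossCorrection R i₀ j₀ i j = 0 := by
  rw [crossCorrection_apply, h, zero_mul]

theorem crossCorrection_apply_eq_zero_of_pivot_row_eq_zero {j : n} (h : R i₀ j = 0) (i : m) :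
    crossCorrection R i₀ j₀ i j = 0 := by
  rw [crossCorrection_apply, h, mul_zero, mul_zero]

end Semiring

theorem crossCorrection_apply_eq_div [Semifield α] (R : Matrix m n α) (i₀ : m) (j₀ : n)
    (i : m) (j : n) :
    crossCorrection R i₀ j₀ i j = R i j₀ * R i₀ j / R i₀ j₀ := by
  rw [crossCorrection_apply, Ring.inverse_eq_inv, inv_mul_eq_div, mul_div_assoc]

end CrossCorrection

theorem stmt10_general {α : Type*} [Ring α] {m n : Type*}
    (A A' R A'' R'' : Matrix m n α)
    (hR : R = A - A')
    (i₀ : m) (j₀ : n) (hpiv : IsUnit (R i₀ j₀))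
    (hA'' : A'' = A' + crossCorrection R i₀ j₀)
    (hR'' : R'' = A - A'') :
    (∀ j, R'' i₀ j = 0) ∧ (∀ i, R'' i j₀ = 0) ∧
    (∀ i', (∀ j, R i' j = 0) → ∀ j, R'' i' j = 0) ∧
    (∀ j', (∀ i, R i j' = 0) → ∀ i, R'' i j' = 0) := by
  have residual_update : R'' = R - crossCorrection R i₀ j₀ := by
    rw [hR'', hA'', sub_add_eq_sub_sub, ← hR]
  simp only [residual_update, Matrix.sub_apply]
  refine ⟨fun j => ?pivot_row, fun i => ?pivot_col, fun i' hrow j => ?zero_row,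
    fun j' hcol i => ?zero_col⟩
  case pivot_row => rw [crossCorrection_apply_pivot_row hpiv, sub_self]
  case pivot_col => rw [crossCorrection_apply_pivot_col hpiv, sub_self]
  case zero_row =>
    rw [hrow j, crossCorrection_apply_eq_zero_of_pivot_col_eq_zero (hrow j₀), sub_zero]
  case zero_col =>
    rw [hcol i, crossCorrection_apply_eq_zero_of_pivot_row_eq_zero (hcol i₀), sub_zero]

/-- Let `A, A'` be `m × n` matrices over a field, `R = A - A'`, and
suppose `R i₀ j₀ ≠ 0`. Define the rank-one corrected matrix
`A'' i j = A' i j + R i j₀ * R i₀ j / R i₀ j₀` and the new residual `R'' = A - A''`.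
Then (1) `R'' i₀ j = 0` for all `j` and `R'' i j₀ = 0` for all `i`; and
(2) if a row (resp. column) of `R` is identically zero, then the same row
(resp. column) of `R''` is identically zero. -/
theorem stmt10 {𝔽 : Type*} [Field 𝔽] {m n : Type*}
    (A A' R A'' R'' : Matrix m n 𝔽)
    (hR : ∀ i j, R i j = A i j - A' i j)
    (i₀ : m) (j₀ : n) (hpiv : R i₀ j₀ ≠ 0)
    (hA'' : ∀ i j, A'' i j = A' i j + R i j₀ * R i₀ j / R i₀ j₀)
    (hR'' : ∀ i j, R'' i j = A i j - A'' i j) :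
    (∀ j, R'' i₀ j = 0) ∧ (∀ i, R'' i j₀ = 0) ∧
    (∀ i', (∀ j, R i' j = 0) → ∀ j, R'' i' j = 0) ∧
    (∀ j', (∀ i, R i j' = 0) → ∀ i, R'' i j' = 0) :=
  stmt10_general A A' R A'' R'' (Matrix.ext hR) i₀ j₀ hpiv.isUnit (Matrix.ext fun i j => by
    rw [hA'', Matrix.add_apply, crossCorrection_apply_eq_div]) (Matrix.ext hR'')
end

section
/- Let A be an m × n matrix over a field. Define the ACA iterates by A₀ = 0 and, for ℓ = 1,…,k, A_ℓ(i,j) = A_{ℓ−1}(i,j) + R_{ℓ−1}(i,j_ℓ)·R_{ℓ−1}(i_ℓ,j)/R_{ℓ−1}(i_ℓ,j_ℓ), where R_{ℓ−1} = A − A_{ℓ−1} and each pivot satisfies R_{ℓ−1}(i_ℓ, j_ℓ) ≠ 0. Then the k-step approximation interpolates A on all selected cross sections: A_k(i_ℓ, j) = A(i_ℓ, j) for all j and all ℓ ≤ k, and A_k(i, j_ℓ) = A(i, j_ℓ) for all i and all ℓ ≤ k. -/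
/-!
Subtracting from a residual `R` its cross through the pivot `(p, q)` annihilates row `p` and
column `q`. It also keeps every row and column that already vanishes: the cross is built from
multiples of the pivot column and of the pivot row, and their entries there are zero. So the zeros
created by successive pivots accumulate, and a zero of the residual `A - A_k` is an interpolated
entry of `A`.
-/

section CrossApprox

variable {α m n : Type*}

section MonoidWithZero

variable [MonoidWithZero α] {R : Matrix m n α} {p : m} {q : n}

/-- The rank-one cross approximation of `R` with pivot `(p, q)`, the correction added in one step
of adaptive cross approximation. The inverse pivot stands between the two factors, the order in
which the formula interpolates over noncommutative entries. -/
noncomputable def crossApprox (R : Matrix m n α) (p : m) (q : n) : Matrix m n α :=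
  .of fun i j => R i q * Ring.inverse (R p q) * R p j

theorem row_crossApprox_pivot (hpq : IsUnit (R p q)) : (crossApprox R p q).row p = R.row p := by
  ext j
  simp only [crossApprox, Matrix.row_apply, Matrix.of_apply, Ring.mul_inverse_cancel _ hpq, one_mul]

theorem col_crossApprox_pivot (hpq : IsUnit (R p q)) : (crossApprox R p q).col q = R.col q := by
  ext i
  simp only [crossApprox, Matrix.col_apply, Matrix.of_apply, mul_assoc,
    Ring.inverse_mul_cancel _ hpq, mul_one]

theorem row_crossApprox_eq_zero {i : m} (hi : R.row i = 0) : (crossApprox R p q).row i = 0 := by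
  ext j
  have hiq : R i q = 0 := congrFun hi q
  simp only [crossApprox, Matrix.row_apply, Matrix.of_apply, hiq, zero_mul, Pi.zero_apply]

theorem col_crossApprox_eq_zero {j : n} (hj : R.col j = 0) : (crossApprox R p q).col j = 0 := by
  ext i
  have hpj : R p j = 0 := congrFun hj p
  simp only [crossApprox, Matrix.col_apply, Matrix.of_apply, hpj, mul_zero, Pi.zero_apply]

end MonoidWithZero

section Ring

variable [Ring α] {R : ℕ → Matrix m n α} {p : ℕ → m} {q : ℕ → n} {k : ℕ}

theorem row_residual_pivot_eq_zero (hpiv : ∀ ℓ < k, IsUnit (R ℓ (p ℓ) (q ℓ)))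
    (hR : ∀ ℓ < k, R (ℓ + 1) = R ℓ - crossApprox (R ℓ) (p ℓ) (q ℓ)) {ℓ : ℕ} (hℓ : ℓ < k) :
    (R k).row (p ℓ) = 0 := by
  induction k with
  | zero => exact absurd hℓ ℓ.not_lt_zero
  | succ k ih =>
    have hstep : (R (k + 1)).row (p ℓ)
        = (R k).row (p ℓ) - (crossApprox (R k) (p k) (q k)).row (p ℓ) :=
      congrArg (Matrix.row · (p ℓ)) (hR k k.lt_succ_self)
    rw [hstep]
    rcases Nat.lt_succ_iff_lt_or_eq.mp hℓ with hlt | rfl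
    · have hzero := ih (fun s hs => hpiv s (hs.trans k.lt_succ_self))
        (fun s hs => hR s (hs.trans k.lt_succ_self)) hlt
      rw [row_crossApprox_eq_zero hzero, hzero, sub_zero]
    · rw [row_crossApprox_pivot (hpiv ℓ hℓ), sub_self]

theorem col_residual_pivot_eq_zero (hpiv : ∀ ℓ < k, IsUnit (R ℓ (p ℓ) (q ℓ)))
    (hR : ∀ ℓ < k, R (ℓ + 1) = R ℓ - crossApprox (R ℓ) (p ℓ) (q ℓ)) {ℓ : ℕ} (hℓ : ℓ < k) :
    (R k).col (q ℓ) = 0 := by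
  induction k with
  | zero => exact absurd hℓ ℓ.not_lt_zero
  | succ k ih =>
    have hstep : (R (k + 1)).col (q ℓ)
        = (R k).col (q ℓ) - (crossApprox (R k) (p k) (q k)).col (q ℓ) :=
      congrArg (Matrix.col · (q ℓ)) (hR k k.lt_succ_self)
    rw [hstep]
    rcases Nat.lt_succ_iff_lt_or_eq.mp hℓ with hlt | rfl
    · have hzero := ih (fun s hs => hpiv s (hs.trans k.lt_succ_self))
        (fun s hs => hR s (hs.trans k.lt_succ_self)) hlt
      rw [col_crossApprox_eq_zero hzero, hzero, sub_zero]
    · rw [col_crossApprox_pivot (hpiv ℓ hℓ), sub_self]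

end Ring

end CrossApprox

theorem stmt11_general {α : Type*} [Ring α] {m n : Type*}
    (A : Matrix m n α) (k : ℕ) (B : ℕ → Matrix m n α) (pi : ℕ → m) (pj : ℕ → n)
    (hpiv : ∀ ℓ < k, IsUnit ((A - B ℓ) (pi (ℓ + 1)) (pj (ℓ + 1))))
    (hrec : ∀ ℓ < k, B (ℓ + 1) = B ℓ + crossApprox (A - B ℓ) (pi (ℓ + 1)) (pj (ℓ + 1))) :
    (∀ ℓ, 1 ≤ ℓ → ℓ ≤ k → ∀ j, B k (pi ℓ) j = A (pi ℓ) j) ∧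
    (∀ ℓ, 1 ≤ ℓ → ℓ ≤ k → ∀ i, B k i (pj ℓ) = A i (pj ℓ)) := by
  have hresidual : ∀ ℓ < k, A - B (ℓ + 1)
      = A - B ℓ - crossApprox (A - B ℓ) (pi (ℓ + 1)) (pj (ℓ + 1)) := fun ℓ hℓ => by
    rw [hrec ℓ hℓ, sub_add_eq_sub_sub]
  constructor
  · rintro (_ | ℓ) hpos hle j
    · exact absurd hpos (Nat.not_succ_le_zero 0)
    · have hrow := row_residual_pivot_eq_zero (R := fun s => A - B s) (p := fun s => pi (s + 1))
        (q := fun s => pj (s + 1)) hpiv hresidual hle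
      exact (sub_eq_zero.mp (congrFun hrow j)).symm
  · rintro (_ | ℓ) hpos hle i
    · exact absurd hpos (Nat.not_succ_le_zero 0)
    · have hcol := col_residual_pivot_eq_zero (R := fun s => A - B s) (p := fun s => pi (s + 1))
        (q := fun s => pj (s + 1)) hpiv hresidual hle
      exact (sub_eq_zero.mp (congrFun hcol i)).symm

/-- Let `A` be an `m × n` matrix over a field. Define the ACA
iterates by `B 0 = 0` and, for `ℓ = 0,…,k-1`,
`B (ℓ+1) i j = B ℓ i j + R ℓ i (pj (ℓ+1)) * R ℓ (pi (ℓ+1)) j / R ℓ (pi (ℓ+1)) (pj (ℓ+1))`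
where `R ℓ = A - B ℓ` and each pivot value `R ℓ (pi (ℓ+1)) (pj (ℓ+1))` is nonzero.
Then the `k`-step approximation interpolates `A` on all selected cross sections:
`B k (pi ℓ) j = A (pi ℓ) j` and `B k i (pj ℓ) = A i (pj ℓ)` for all `1 ≤ ℓ ≤ k`. -/
theorem stmt11 {𝔽 : Type*} [Field 𝔽] {m n : Type*}
    (A : Matrix m n 𝔽) (k : ℕ) (B : ℕ → Matrix m n 𝔽)
    (pi : ℕ → m) (pj : ℕ → n)
    (hB0 : B 0 = 0)
    (hpiv : ∀ ℓ < k, (A - B ℓ) (pi (ℓ + 1)) (pj (ℓ + 1)) ≠ 0)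
    (hrec : ∀ ℓ < k, ∀ i j, B (ℓ + 1) i j = B ℓ i j
        + (A - B ℓ) i (pj (ℓ + 1)) * (A - B ℓ) (pi (ℓ + 1)) j
          / (A - B ℓ) (pi (ℓ + 1)) (pj (ℓ + 1))) :
    (∀ ℓ, 1 ≤ ℓ → ℓ ≤ k → ∀ j, B k (pi ℓ) j = A (pi ℓ) j) ∧
    (∀ ℓ, 1 ≤ ℓ → ℓ ≤ k → ∀ i, B k i (pj ℓ) = A i (pj ℓ)) := by
  refine stmt11_general A k B pi pj (fun ℓ hℓ => (hpiv ℓ hℓ).isUnit)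
    fun ℓ hℓ => Matrix.ext fun i j => ?_
  simp only [hrec ℓ hℓ, Matrix.add_apply, crossApprox, Matrix.of_apply,
    Ring.inverse_eq_inv, div_eq_mul_inv, mul_right_comm]
end
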